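/- arXiv:2105.13692 — 5 statements merged into one kernel-verified Lean document; each statement's English description precedes it below -/
import Mathlib

section
/- Let φ : A → B and ψ : B' → B be homomorphisms of commutative rings with φ surjective, and let A' = A ×_B B' be the fiber product with projections ψ' : A' → A and φ' : A' → B'. Regard A and B' as A'-algebras via ψ' and φ'. Then the natural ring homomorphism A ⊗_{A'} B' → B sending a ⊗ b' to φ(a)·ψ(b') is an isomorphism. -/
/-!
Given `b' ∈ B'`, surjectivity of `φ` yields `a₀` with `φ a₀ = ψ b'`, so `(a₀, b') ∈ A'` and
`a ⊗ b' = a₀ a ⊗ 1`. Hence every element of `A ⊗[A'] B'` has the form `a ⊗ 1`, with image `φ a`.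
If `φ a = 0` then `(a, 0) ∈ A'`, so `a ⊗ 1 = 1 ⊗ 0 = 0`; this gives injectivity, and surjectivity
is that of `φ`.
-/

/-- The fiber product `A ×_B B'` of `φ : A → B` and `ψ : B' → B`, as the subring
`{(a, b') ∈ A × B' : φ a = ψ b'}` of `A × B'`. -/
def fiberProduct {A B B' : Type*} [CommRing A] [CommRing B] [CommRing B']
    (φ : A →+* B) (ψ : B' →+* B) : Subring (A × B') :=
  RingHom.eqLocus (φ.comp (RingHom.fst A B')) (ψ.comp (RingHom.snd A B'))

/-- The first projection `ψ' : A ×_B B' → A`. -/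
def fstProj {A B B' : Type*} [CommRing A] [CommRing B] [CommRing B']
    (φ : A →+* B) (ψ : B' →+* B) : fiberProduct φ ψ →+* A :=
  (RingHom.fst A B').comp (fiberProduct φ ψ).subtype

/-- The second projection `φ' : A ×_B B' → B'`. -/
def sndProj {A B B' : Type*} [CommRing A] [CommRing B] [CommRing B']
    (φ : A →+* B) (ψ : B' →+* B) : fiberProduct φ ψ →+* B' :=
  (RingHom.snd A B').comp (fiberProduct φ ψ).subtype


open scoped TensorProduct

/-- If `φ : A → B` is surjective, then with `A` and `B'` regarded as algebras over
`A' = A ×_B B'` via the two projections, the natural ring homomorphism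
`A ⊗[A'] B' → B`, sending `a ⊗ b'` to `φ a * ψ b'`, is an isomorphism. -/
theorem tensor_fiberProduct_bijective {A B B' : Type*} [CommRing A] [CommRing B] [CommRing B']
    (φ : A →+* B) (ψ : B' →+* B) (hφ : Function.Surjective φ) :
    letI : Algebra (fiberProduct φ ψ) A := (fstProj φ ψ).toAlgebra
    letI : Algebra (fiberProduct φ ψ) B' := (sndProj φ ψ).toAlgebra
    letI : Algebra (fiberProduct φ ψ) B := (φ.comp (fstProj φ ψ)).toAlgebra
    Function.Bijective
      (Algebra.TensorProduct.productMap
        (AlgHom.mk (R := fiberProduct φ ψ) φ (fun _ => rfl))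
        (AlgHom.mk (R := fiberProduct φ ψ) ψ (fun c => c.2.symm))) := by
  letI : Algebra (fiberProduct φ ψ) A := (fstProj φ ψ).toAlgebra
  letI : Algebra (fiberProduct φ ψ) B' := (sndProj φ ψ).toAlgebra
  letI : Algebra (fiberProduct φ ψ) B := (φ.comp (fstProj φ ψ)).toAlgebra
  -- The tensor relation for `c = (a₀, b₀) ∈ A'`, moving `c` across the tensor sign.
  have move : ∀ (a a₀ : A) (b₀ : B'), φ a₀ = ψ b₀ →
      a ⊗ₜ[fiberProduct φ ψ] b₀ = (a₀ * a) ⊗ₜ[fiberProduct φ ψ] (1 : B') := by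
    intro a a₀ b₀ h
    let c : fiberProduct φ ψ := ⟨(a₀, b₀), h⟩
    have hb : c • (1 : B') = b₀ := mul_one b₀
    have ha : c • a = a₀ * a := rfl
    rw [← hb, ← ha, TensorProduct.smul_tmul]
  have pure_left : ∀ x : A ⊗[fiberProduct φ ψ] B',
      ∃ a : A, x = a ⊗ₜ[fiberProduct φ ψ] (1 : B') := by
    intro x
    induction x using TensorProduct.induction_on with
    | zero => exact ⟨0, (TensorProduct.zero_tmul _ _).symm⟩
    | tmul a b =>
      obtain ⟨a₀, h⟩ := hφ (ψ b)
      exact ⟨a₀ * a, move a a₀ b h⟩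
    | add x y hx hy =>
      obtain ⟨a, rfl⟩ := hx
      obtain ⟨b, rfl⟩ := hy
      exact ⟨a + b, (TensorProduct.add_tmul _ _ _).symm⟩
  refine ⟨(injective_iff_map_eq_zero _).2 fun x hx => ?_, fun b => ?_⟩
  · obtain ⟨a, rfl⟩ := pure_left x
    have ha : φ a = 0 := by
      rw [Algebra.TensorProduct.productMap_apply_tmul, map_one, mul_one] at hx
      exact hx
    -- Since `φ a = 0`, the pair `(a, 0)` lies in `A'`.
    have h := move 1 a 0 (by rw [ha, map_zero])
    rw [mul_one, TensorProduct.tmul_zero] at h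
    exact h.symm
  · obtain ⟨a, rfl⟩ := hφ b
    refine ⟨a ⊗ₜ[fiberProduct φ ψ] (1 : B'), ?_⟩
    rw [Algebra.TensorProduct.productMap_apply_tmul, map_one, mul_one]
    rfl
end

section
/- Let φ : A → B and ψ : B' → B be homomorphisms of commutative rings with φ surjective, and assume ψ is finite, i.e. B is a finitely generated B'-module via ψ. Let A' = A ×_B B' be the fiber product with first projection ψ' : A' → A. Then ψ' is finite, i.e. A is a finitely generated A'-module via ψ'. -/
/-- If `φ : A → B` is surjective and `ψ : B' → B` is finite (i.e. `B` is a finitely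
generated `B'`-module via `ψ`), then the first projection `ψ' : A ×_B B' → A` is
finite (i.e. `A` is a finitely generated module over `A' = A ×_B B'` via `ψ'`). -/
theorem fstProj_finite {A B B' : Type*} [CommRing A] [CommRing B] [CommRing B']
    (φ : A →+* B) (ψ : B' →+* B) (hφ : Function.Surjective φ) (hψ : ψ.Finite) :
    (fstProj φ ψ).Finite := by
  classical
  algebraize [ψ, fstProj φ ψ]
  obtain ⟨s, hs⟩ := (inferInstance : Module.Finite B' B).fg_top
  obtain ⟨g, hg⟩ := hφ.hasRightInverse
  change Module.Finite (fiberProduct φ ψ) A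
  refine ⟨⟨insert 1 (s.image g), ?_⟩⟩
  set N := Submodule.span (fiberProduct φ ψ) (↑(insert (1 : A) (s.image g)) : Set A) with hN
  have hker : ∀ a : A, φ a = 0 → a ∈ N := by
    intro a ha
    -- `(a, 0)` lies in the fiber product, so `a` is a multiple of the generator `1`.
    let x : fiberProduct φ ψ :=
      ⟨(a, 0), show φ a = ψ 0 by rw [ha, map_zero]⟩
    have hx : x • (1 : A) = a := by
      rw [Algebra.smul_def, mul_one]; rfl
    rw [← hx]
    exact N.smul_mem x (Submodule.subset_span (by simp))
  have key : ∀ b ∈ Submodule.span B' (s : Set B), ∃ n ∈ N, φ n = b := by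
    intro b hb
    induction hb using Submodule.span_induction with
    | mem b hb =>
      exact ⟨g b, Submodule.subset_span (by
        simpa using Or.inr ⟨b, hb, rfl⟩), hg b⟩
    | zero => exact ⟨0, N.zero_mem, map_zero φ⟩
    | add b c _ _ ihb ihc =>
      obtain ⟨n, hn, rfl⟩ := ihb
      obtain ⟨m, hm, rfl⟩ := ihc
      exact ⟨n + m, N.add_mem hn hm, map_add φ n m⟩
    | smul r b _ ih =>
      obtain ⟨n, hn, rfl⟩ := ih
      -- Surjectivity of `φ` lifts the scalar `r` to an element of the fiber product.
      let x : fiberProduct φ ψ := ⟨(g (ψ r), r), hg (ψ r)⟩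
      refine ⟨x • n, N.smul_mem x hn, ?_⟩
      rw [Algebra.smul_def, Algebra.smul_def, map_mul]
      exact congrArg (· * φ n) (hg (ψ r))
  refine eq_top_iff.2 fun a _ => ?_
  obtain ⟨n, hn, hna⟩ := key (φ a) (hs ▸ Submodule.mem_top)
  rw [← sub_add_cancel a n]
  exact N.add_mem (hker _ (by rw [map_sub, hna, sub_self])) hn
end

section
/- Let φ : A → B and ψ : B' → B be homomorphisms of commutative rings with φ surjective, and assume that B is integral over the image of ψ, i.e. every element of B satisfies a monic polynomial with coefficients in ψ(B'). Let A' = A ×_B B' be the fiber product with first projection ψ' : A' → A. Then A is integral over the image of ψ', i.e. the ring homomorphism ψ' : A' → A is integral. -/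
/-- If `φ : A → B` is surjective and `B` is integral over the image of `ψ : B' → B`,
then `A` is integral over the image of the first projection `ψ' : A ×_B B' → A`,
i.e. the ring homomorphism `ψ'` is integral. -/
theorem fstProj_isIntegral {A B B' : Type*} [CommRing A] [CommRing B] [CommRing B']
    (φ : A →+* B) (ψ : B' →+* B) (hφ : Function.Surjective φ) (hψ : ψ.IsIntegral) :
    (fstProj φ ψ).IsIntegral := by
  intro a
  obtain ⟨p, hp, hpa⟩ := hψ (φ a)
  have hsurj : Function.Surjective (sndProj φ ψ) := fun b' =>
    have ⟨x, hx⟩ := hφ (ψ b')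
    ⟨⟨(x, b'), hx⟩, rfl⟩
  have hcomm : φ.comp (fstProj φ ψ) = ψ.comp (sndProj φ ψ) := RingHom.ext fun x => x.2
  obtain ⟨q, hqp, -, hq⟩ := Polynomial.lifts_and_natDegree_eq_and_monic
    ((Polynomial.mem_lifts _).2 (Polynomial.map_surjective _ hsurj p)) hp
  have hker : φ (q.eval₂ (fstProj φ ψ) a) = 0 := by
    rw [Polynomial.hom_eval₂, hcomm, ← Polynomial.eval₂_map, hqp, hpa]
  let c : fiberProduct φ ψ := ⟨(a * q.eval₂ (fstProj φ ψ) a, 0), by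
    change φ (a * _) = ψ 0
    rw [map_mul, hker, mul_zero, map_zero]⟩
  -- The factor `X` makes the degree positive, so subtracting the constant `c` preserves
  -- monicity even when `q = 1` (which can occur if `B = 0`).
  refine ⟨Polynomial.X * q - Polynomial.C c, ?_, ?_⟩
  · nontriviality fiberProduct φ ψ
    refine (Polynomial.monic_X.mul hq).sub_of_left (Polynomial.degree_C_le.trans_lt ?_)
    rw [← Polynomial.natDegree_pos_iff_degree_pos, Polynomial.monic_X.natDegree_mul hq,
      Polynomial.natDegree_X]
    omega
  · rw [Polynomial.eval₂_sub, Polynomial.eval₂_mul, Polynomial.eval₂_X, Polynomial.eval₂_C]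
    exact sub_self _
end

section
/- Artin–Tate lemma for pinchings: let R be a noetherian commutative ring, let A and B' be finitely generated commutative R-algebras, let B be a commutative R-algebra, let φ : A → B be a surjective R-algebra homomorphism, and let ψ : B' → B be an R-algebra homomorphism making B a finitely generated B'-module. Then the fiber product A' = A ×_B B' = {(a, b') ∈ A × B' : φ(a) = ψ(b')} is a finitely generated R-algebra. -/
/-!
Put `A' = A ×_B B'`. By the Artin–Tate lemma (`fg_of_fg_of_fg`) applied to `R → A' ⊆ A × B'`, it
suffices that `A × B'` is a finite `A'`-module. If `s` is a finite set generating `B` over `B'` and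
`g` is a set-theoretic section of `φ`, then `A × B'` is generated over `A'` by `(1, 0)`, `(0, 1)`
and the `(g b, 0)` with `b ∈ s`. Indeed, surjectivity of `φ` lifts every element of `B'` to `A'`,
so the span of these elements contains `0 × B'` and the `(a, 0)` for some lift `a` of any given
element of `B`; two lifts differ by an element `k` of `ker φ`, and `(k, 0) ∈ A'`.
-/

/-- Artin–Tate lemma for pinchings: let `R` be a noetherian commutative ring, `A` and
`B'` finitely generated commutative `R`-algebras, `B` a commutative `R`-algebra,
`φ : A → B` a surjective `R`-algebra homomorphism, and `ψ : B' → B` an `R`-algebra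
homomorphism making `B` a finitely generated `B'`-module. Then the fiber product
`A' = A ×_B B' = {(a, b') : φ a = ψ b'}`, as an `R`-subalgebra of `A × B'`, is a
finitely generated `R`-algebra. -/
theorem artin_tate_pinching {R A B B' : Type*} [CommRing R] [IsNoetherianRing R]
    [CommRing A] [CommRing B] [CommRing B']
    [Algebra R A] [Algebra R B] [Algebra R B']
    (hA : Algebra.FiniteType R A) (hB' : Algebra.FiniteType R B')
    (φ : A →ₐ[R] B) (ψ : B' →ₐ[R] B)
    (hφ : Function.Surjective φ) (hψ : ψ.toRingHom.Finite) :
    (AlgHom.equalizer (φ.comp (AlgHom.fst R A B')) (ψ.comp (AlgHom.snd R A B'))).FG := by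
  set A' := AlgHom.equalizer (φ.comp (AlgHom.fst R A B')) (ψ.comp (AlgHom.snd R A B'))
  have hfin : (⊤ : Submodule A' (A × B')).FG := by
    classical
    let _ : Algebra B' B := ψ.toRingHom.toAlgebra
    have hmod : Module.Finite B' B := hψ
    obtain ⟨s, hs⟩ := hmod.fg_top
    obtain ⟨g, hg⟩ := hφ.hasRightInverse
    let t : Finset (A × B') := insert (1, 0) (insert (0, 1) (s.image fun b => (g b, 0)))
    let S : Submodule A' (A × B') := Submodule.span A' (t : Set (A × B'))
    have h10 : ((1, 0) : A × B') ∈ S := Submodule.subset_span (by simp [t])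
    have h01 : ((0, 1) : A × B') ∈ S := Submodule.subset_span (by simp [t])
    have hgs : ∀ b ∈ s, ((g b, 0) : A × B') ∈ S := fun b hb =>
      Submodule.subset_span (by
        simp only [t, Finset.coe_insert, Finset.coe_image]
        exact Or.inr (Or.inr ⟨b, hb, rfl⟩))
    have hmul : ∀ x y : A × B', φ x.1 = ψ x.2 → y ∈ S → x * y ∈ S := fun x y hx hy =>
      S.smul_mem (⟨x, hx⟩ : A') hy
    have hlift : ∀ b : B, ∃ a : A, φ a = b ∧ ((a, 0) : A × B') ∈ S := by
      intro b
      have hb : b ∈ Submodule.span B' (s : Set B) := hs ▸ Submodule.mem_top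
      induction hb using Submodule.span_induction with
      | mem b hb => exact ⟨g b, hg b, hgs b hb⟩
      | zero => exact ⟨0, map_zero φ, S.zero_mem⟩
      | add x y _ _ hx hy =>
        obtain ⟨a, ha, haS⟩ := hx
        obtain ⟨a₂, ha₂, haS₂⟩ := hy
        exact ⟨a + a₂, by rw [map_add, ha, ha₂], by simpa using S.add_mem haS haS₂⟩
      | smul c x _ hx =>
        obtain ⟨a, ha, haS⟩ := hx
        refine ⟨g (ψ c) * a, ?_, ?_⟩
        · rw [map_mul, hg, ha]
          rfl
        · simpa using hmul (g (ψ c), c) (a, 0) (hg _) haS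
    refine ⟨t, eq_top_iff.2 ?_⟩
    rintro ⟨a, b'⟩ -
    obtain ⟨a₀, ha₀, haS⟩ := hlift (φ a)
    have hk : ((a - a₀, 0) : A × B') ∈ S := by
      simpa using hmul (a - a₀, 0) (1, 0) (by simp [ha₀]) h10
    have hb : ((0, b') : A × B') ∈ S := by
      simpa using hmul (g (ψ b'), b') (0, 1) (hg _) h01
    simpa using S.add_mem (S.add_mem hk haS) hb
  have hC : (⊤ : Subalgebra R (A × B')).FG :=
    (inferInstance : Algebra.FiniteType R (A × B')).out
  exact (Subalgebra.fg_top A').1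
    (fg_of_fg_of_fg R A' (A × B') hC hfin Subtype.val_injective)
end

section
/- Flat base change for fiber products of rings: let φ : A → B be a surjective homomorphism of commutative rings, ψ : B' → B a ring homomorphism, A' = A ×_B B' the fiber product, and D a flat A'-algebra (i.e. a commutative A'-algebra that is flat as an A'-module). Then the natural ring homomorphism D → (A ⊗_{A'} D) ×_{B ⊗_{A'} D} (B' ⊗_{A'} D) is an isomorphism, where the fiber product on the right is taken with respect to the maps φ ⊗ id and ψ ⊗ id. -/
open TensorProduct in
/-- If `0 → R → A × B' → B` is exact, with second map `(a, b') ↦ f a - g b'`, and `D` is flat over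
`R`, then `0 → D → (A ⊗ D) × (B' ⊗ D) → B ⊗ D` is exact, here expressed elementwise. -/
theorem flat_existsUnique {R A B B' D : Type*} [CommRing R] [CommRing A] [CommRing B]
    [CommRing B'] [CommRing D] [Algebra R A] [Algebra R B] [Algebra R B'] [Algebra R D]
    [Module.Flat R D] (f : A →ₗ[R] B) (g : B' →ₗ[R] B)
    (hinj : Function.Injective
      ((Algebra.linearMap R A).prod (Algebra.linearMap R B')))
    (hex : Function.Exact ((Algebra.linearMap R A).prod (Algebra.linearMap R B'))
      (f.coprod (-g)))
    (x : A ⊗[R] D) (y : B' ⊗[R] D) (hxy : f.rTensor D x = g.rTensor D y) :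
    ∃! d : D, (1 : A) ⊗ₜ[R] d = x ∧ (1 : B') ⊗ₜ[R] d = y := by
  let e := TensorProduct.prodLeft R R A B' D
  let i := ((Algebra.linearMap R A).prod (Algebra.linearMap R B')).rTensor D
  have hi : Function.Injective i := Module.Flat.rTensor_preserves_injective_linearMap _ hinj
  have hex' : Function.Exact i ((f.coprod (-g)).rTensor D) := Module.Flat.rTensor_exact D hex
  have hei (d : D) : e (i (1 ⊗ₜ d)) = (1 ⊗ₜ d, 1 ⊗ₜ d) := by
    simp [e, i]
  have hq (z : (A × B') ⊗[R] D) :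
      (f.coprod (-g)).rTensor D z = f.rTensor D (e z).1 - g.rTensor D (e z).2 := by
    induction z with
    | zero => simp
    | add z w hz hw =>
      rw [map_add, hz, hw, map_add]
      simp only [Prod.fst_add, Prod.snd_add, map_add]
      abel
    | tmul p d =>
      obtain ⟨a, b⟩ := p
      simp [e, TensorProduct.add_tmul, TensorProduct.neg_tmul, sub_eq_add_neg]
  obtain ⟨w, hw⟩ := (hex' (e.symm (x, y))).1 (by rw [hq]; simp [hxy])
  obtain ⟨d, rfl⟩ := (TensorProduct.lid R D).symm.surjective w
  rw [TensorProduct.lid_symm_apply] at hw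
  have hd : e (i (1 ⊗ₜ d)) = (x, y) := by rw [hw, e.apply_symm_apply]
  rw [hei, Prod.mk.injEq] at hd
  refine ⟨d, hd, fun d' hd' => ?_⟩
  have h : i ((TensorProduct.lid R D).symm d') = i ((TensorProduct.lid R D).symm d) := by
    apply e.injective
    rw [TensorProduct.lid_symm_apply, TensorProduct.lid_symm_apply, hei, hei,
      hd'.1, hd'.2, hd.1, hd.2]
  exact (TensorProduct.lid R D).symm.injective (hi h)

open TensorProduct in
set_option maxHeartbeats 2000000 in
/-- Flat base change for fiber products of rings: if `φ : A → B` is surjective,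
`A' = A ×_B B'` is the fiber product, and `D` is a flat `A'`-algebra, then the natural
ring homomorphism `D → (A ⊗[A'] D) ×_{B ⊗[A'] D} (B' ⊗[A'] D)`, sending `d` to
`(1 ⊗ d, 1 ⊗ d)`, is an isomorphism, where the fiber product on the right is taken
with respect to the base changed maps `φ ⊗ id` and `ψ ⊗ id`. -/
theorem flat_base_change_fiberProduct {A B B' D : Type*}
    [CommRing A] [CommRing B] [CommRing B'] [CommRing D]
    (φ : A →+* B) (ψ : B' →+* B) (hφ : Function.Surjective φ)
    [Algebra (fiberProduct φ ψ) D] [Module.Flat (fiberProduct φ ψ) D] :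
    letI : Algebra (fiberProduct φ ψ) A := (fstProj φ ψ).toAlgebra
    letI : Algebra (fiberProduct φ ψ) B' := (sndProj φ ψ).toAlgebra
    letI : Algebra (fiberProduct φ ψ) B := (φ.comp (fstProj φ ψ)).toAlgebra
    let φD : A ⊗[fiberProduct φ ψ] D →ₐ[fiberProduct φ ψ] B ⊗[fiberProduct φ ψ] D :=
      Algebra.TensorProduct.map (AlgHom.mk (R := fiberProduct φ ψ) φ (fun _ => rfl))
        (AlgHom.id (fiberProduct φ ψ) D)
    let ψD : B' ⊗[fiberProduct φ ψ] D →ₐ[fiberProduct φ ψ] B ⊗[fiberProduct φ ψ] D :=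
      Algebra.TensorProduct.map (AlgHom.mk (R := fiberProduct φ ψ) ψ (fun c => c.2.symm))
        (AlgHom.id (fiberProduct φ ψ) D)
    Function.Bijective
      (RingHom.codRestrict
        (RingHom.prod
          (Algebra.TensorProduct.includeRight (R := fiberProduct φ ψ) (A := A)
            (B := D)).toRingHom
          (Algebra.TensorProduct.includeRight (R := fiberProduct φ ψ) (A := B')
            (B := D)).toRingHom)
        (RingHom.eqLocus
          (φD.toRingHom.comp (RingHom.fst (A ⊗[fiberProduct φ ψ] D) (B' ⊗[fiberProduct φ ψ] D)))
          (ψD.toRingHom.comp (RingHom.snd (A ⊗[fiberProduct φ ψ] D) (B' ⊗[fiberProduct φ ψ] D))))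
        (fun d => show φD ((1 : A) ⊗ₜ[fiberProduct φ ψ] d) = ψD ((1 : B') ⊗ₜ[fiberProduct φ ψ] d) by
          simp only [φD, ψD, Algebra.TensorProduct.map_tmul, AlgHom.coe_mk, map_one,
            AlgHom.coe_id, id_eq])) := by
  let _ : Algebra (fiberProduct φ ψ) A := (fstProj φ ψ).toAlgebra
  let _ : Algebra (fiberProduct φ ψ) B' := (sndProj φ ψ).toAlgebra
  let _ : Algebra (fiberProduct φ ψ) B := (φ.comp (fstProj φ ψ)).toAlgebra
  intro φD ψD
  let f : A →ₐ[fiberProduct φ ψ] B := AlgHom.mk (R := fiberProduct φ ψ) φ (fun _ => rfl)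
  let g : B' →ₐ[fiberProduct φ ψ] B := AlgHom.mk (R := fiberProduct φ ψ) ψ (fun c => c.2.symm)
  have key := flat_existsUnique (D := D) f.toLinearMap g.toLinearMap
    (fun c c' h => Subtype.ext h) (by
      rintro ⟨a, b⟩
      have h0 : (f.toLinearMap.coprod (-g.toLinearMap)) (a, b) = φ a - ψ b :=
        (sub_eq_add_neg (φ a) (ψ b)).symm
      rw [h0, sub_eq_zero]
      refine ⟨fun h => ⟨⟨(a, b), h⟩, rfl⟩, fun ⟨c, hc⟩ => ?_⟩
      have hc' : c.1 = (a, b) := hc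
      have h : φ c.1.1 = ψ c.1.2 := c.2
      rwa [hc'] at h)
  constructor
  · intro d d' h
    have h1 := congrArg (fun z => z.1.1) h
    have h2 := congrArg (fun z => z.1.2) h
    have hd : φD ((1 : A) ⊗ₜ[fiberProduct φ ψ] d) = ψD ((1 : B') ⊗ₜ[fiberProduct φ ψ] d) := by
      simp only [φD, ψD, Algebra.TensorProduct.map_tmul, map_one,
        AlgHom.coe_id, id_eq]
    exact (key _ _ hd).unique ⟨rfl, rfl⟩ ⟨h1.symm, h2.symm⟩
  · rintro ⟨⟨x, y⟩, hxy⟩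
    obtain ⟨d, ⟨h1, h2⟩, -⟩ := key x y hxy
    exact ⟨d, Subtype.ext (Prod.ext h1 h2)⟩
end
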